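/- Let k be a nonzero rational number, and let Λ_C = Λ_A ⊗ Λ(t̃, x̃, ỹ, w̃) be the free graded-commutative ℚ-algebra obtained from Λ_A by adjoining exterior generators t̃, x̃, ỹ of degree 1 and a polynomial generator w̃ of degree 2, with the degree +1 derivation d extending the one on Λ_A by d(t̃) = 0, d(x̃) = a, d(ỹ) = b, d(w̃) = g. Then d∘d = 0, the elements t̃, e − x̃·a, f − ỹ·b and h − k·b·w̃ are d-cocycles, and the cohomology H(Λ_C, d) is isomorphic as a graded ℚ-algebra to the free graded-commutative algebra on four generators of degrees 1, 3, 3, 4 (exterior on the degree 1 and degree 3 generators, polynomial on the degree 4 generator), with the classes of t̃, e − x̃·a, f − ỹ·b and h − k·b·w̃ as generators. (In the paper, Λ_C is the relative model of the fibration Symp(M̃_{μ,c}) → Symp(M_μ) → Im Emb_ω(c,μ), and its cohomology is H^*(Symp(M_μ); ℚ) = Λ(t, x, y, w).) -/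

import Mathlib

/-!
Statement 6: Let `Λ_C = Λ_A ⊗ Λ(t̃, x̃, ỹ, w̃)` be the free graded-commutative ℚ-algebra
obtained from `Λ_A` by adjoining exterior generators `t, x, y` of degree 1 and a polynomial
generator `w` of degree 2, with the degree `+1` derivation `d` extending the one of `Λ_A` by
`d t = 0`, `d x = a`, `d y = b`, `d w = g`.  Then `d ∘ d = 0`; the elements `t`, `e − x·a`,
`f − y·b`, `h − k·b·w` are `d`-cocycles; and `H(Λ_C, d)` is isomorphic as a graded
ℚ-algebra to the free graded-commutative algebra on generators of degrees 1, 3, 3, 4, with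
the classes of those four cocycles as generators.  The isomorphism is encoded by: the four
cocycle representatives satisfy exactly the graded-commutativity relations of free
generators of degrees 1, 3, 3, 4, and the classes of the monomials
`t^{ε₁}·(e−x·a)^{ε₂}·(f−y·b)^{ε₃}·(h−k·b·w)ⁿ` form a homogeneous basis of the cohomology.
-/

/-- The monomial `∏ᵢ ev i ^ p i · ∏ᵢ od i ^ ε i` (odd generators taken in canonical order). -/
def gcMon {A : Type*} [Ring A] {nE nO : ℕ} (ev : Fin nE → A) (od : Fin nO → A) :
    ((Fin nE → ℕ) × (Fin nO → Bool)) → A :=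
  fun m => (List.ofFn fun i => ev i ^ m.1 i).prod *
    (List.ofFn fun i => if m.2 i then od i else 1).prod

/-- The degree of a monomial, given the degrees of the generators. -/
def gcDeg {nE nO : ℕ} (dE : Fin nE → ℕ) (dO : Fin nO → ℕ) :
    ((Fin nE → ℕ) × (Fin nO → Bool)) → ℕ :=
  fun m => (∑ i, dE i * m.1 i) + ∑ i, (if m.2 i then dO i else 0)

/-- The degree-`m` homogeneous component: the span of the monomials of degree `m`. -/
def gcGrade {A : Type*} [Ring A] [Algebra ℚ A] {nE nO : ℕ}
    (ev : Fin nE → A) (od : Fin nO → A) (dE : Fin nE → ℕ) (dO : Fin nO → ℕ) (m : ℕ) :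
    Submodule ℚ A :=
  Submodule.span ℚ (gcMon ev od '' {x | gcDeg dE dO x = m})

/-- `A` is the free graded-commutative ℚ-algebra on even generators `ev` (central) and
odd generators `od` (pairwise anticommuting, squaring to zero): the monomials form a basis. -/
structure IsFreeGCA {A : Type*} [Ring A] [Algebra ℚ A] {nE nO : ℕ}
    (ev : Fin nE → A) (od : Fin nO → A) : Prop where
  li : LinearIndependent ℚ (gcMon ev od)
  spanning : Submodule.span ℚ (Set.range (gcMon ev od)) = ⊤
  central : ∀ i x, Commute (ev i) x
  anticomm : ∀ i j, od i * od j = -(od j * od i)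

/-- The grading of `Λ_B`: `D` has degree 2, `e, f, g, v` degree 3 and `h` degree 4. -/
def gradeLB {A : Type*} [Ring A] [Algebra ℚ A] (D e f g v h : A) : ℕ → Submodule ℚ A :=
  gcGrade ![D, h] ![e, f, g, v] ![2, 4] ![3, 3, 3, 3]

/-- The grading of `Λ_C`: `a, b, w` have degree 2, `h` degree 4, `e, f, g` degree 3 and
`t, x, y` degree 1. -/
def gradeLC {A : Type*} [Ring A] [Algebra ℚ A] (a b e f g h t x y w : A) :
    ℕ → Submodule ℚ A :=
  gcGrade ![a, b, h, w] ![e, f, g, t, x, y] ![2, 2, 4, 2] ![3, 3, 3, 1, 1, 1]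

/-- The monomial basis of the free graded-commutative algebra on generators of degrees
1, 3, 3, 4, realized on the cocycle representatives `t`, `e − x·a`, `f − y·b`,
`h − k·b·w`. -/
def cEltC {A : Type*} [Ring A] [Algebra ℚ A] (a b e f g h t x y w : A) (k : ℚ) :
    (Bool × Bool × Bool) × ℕ → A :=
  fun p => (if p.1.1 then t else 1) * (if p.1.2.1 then e - x * a else 1) *
    (if p.1.2.2 then f - y * b else 1) * (h - k • (b * w)) ^ p.2

/-- Degrees of those monomials. -/
def degCC : (Bool × Bool × Bool) × ℕ → ℕ :=
  fun p => (if p.1.1 then 1 else 0) + (if p.1.2.1 then 3 else 0) +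
    (if p.1.2.2 then 3 else 0) + 4 * p.2


set_option linter.unusedSectionVars false
set_option linter.unusedSimpArgs false
set_option linter.unusedVariables false

/-- odd factor -/
def oF {A : Type*} [Ring A] (u : A) (c : Bool) : A := if c then u else 1

/-- sign -/
def sg (c : Bool) : ℚ := if c then -1 else 1

/-- explicit monomials -/
def MM {A : Type*} [Ring A] (a b e f g h t x y w : A) (i j n l : ℕ)
    (c0 c1 c2 c3 c4 c5 : Bool) : A :=
  (a ^ i * (b ^ j * (h ^ n * w ^ l))) *
    (oF e c0 * (oF f c1 * (oF g c2 * (oF t c3 * (oF x c4 * oF y c5)))))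

theorem MM_eq {A : Type*} [Ring A] (a b e f g h t x y w : A)
    (m : (Fin 4 → ℕ) × (Fin 6 → Bool)) :
    gcMon ![a, b, h, w] ![e, f, g, t, x, y] m =
      MM a b e f g h t x y w (m.1 0) (m.1 1) (m.1 2) (m.1 3)
        (m.2 0) (m.2 1) (m.2 2) (m.2 3) (m.2 4) (m.2 5) := by
  simp [gcMon, MM, oF, List.ofFn_succ, Fin.succ]

theorem MM_eq' {A : Type*} [Ring A] (a b e f g h t x y w : A) (i j n l : ℕ)
    (c0 c1 c2 c3 c4 c5 : Bool) :
    MM a b e f g h t x y w i j n l c0 c1 c2 c3 c4 c5 =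
    gcMon ![a, b, h, w] ![e, f, g, t, x, y] (![i, j, n, l], ![c0, c1, c2, c3, c4, c5]) := by
  rw [MM_eq]; rfl

/-- the relations -/
structure GRel {A : Type*} [Ring A] [Algebra ℚ A] (a b e f g h t x y w : A) : Prop where
  a : ∀ z, a * z = z * a
  b : ∀ z, b * z = z * b
  h : ∀ z, h * z = z * h
  w : ∀ z, w * z = z * w
  anti : ∀ i j, ![e, f, g, t, x, y] i * ![e, f, g, t, x, y] j =
    -(![e, f, g, t, x, y] j * ![e, f, g, t, x, y] i)

section
variable {A : Type*} [Ring A] [Algebra ℚ A] {a b e f g h t x y w : A}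

theorem IsFreeGCA.rel (hfree : IsFreeGCA ![a, b, h, w] ![e, f, g, t, x, y]) :
    GRel a b e f g h t x y w :=
  ⟨hfree.central 0, hfree.central 1, hfree.central 2, hfree.central 3, hfree.anticomm⟩

theorem sq_zero_of_anti {u : A} (hu : u * u = -(u * u)) : u * u = 0 := by
  have : (2 : ℚ) • (u * u) = 0 := by
    rw [two_smul]; nth_rewrite 1 [hu]; simp
  simpa using this

theorem anti_oF {u v : A} (huv : u * v = -(v * u)) (c : Bool) (z : A) :
    u * (oF v c * z) = sg c • (oF v c * (u * z)) := by
  cases c <;> simp [oF, sg]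
  rw [← mul_assoc, huv]; simp [mul_assoc]

theorem self_oF {u : A} (hu : u * u = -(u * u)) (c : Bool) (z : A) :
    u * (oF u c * z) = if c then 0 else oF u true * z := by
  cases c <;> simp [oF]
  rw [← mul_assoc, sq_zero_of_anti hu, zero_mul]

theorem self_oF' {u : A} (hu : u * u = -(u * u)) (c : Bool) :
    u * (oF u c) = if c then 0 else oF u true := by
  simpa using self_oF hu c 1

theorem comm_ev (r : GRel a b e f g h t x y w) (u : A) (i j n l : ℕ) (z : A) :
    u * ((a ^ i * (b ^ j * (h ^ n * w ^ l))) * z) =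
      (a ^ i * (b ^ j * (h ^ n * w ^ l))) * (u * z) := by
  have h1 : Commute u (a ^ i) := Commute.pow_right (r.a u).symm i
  have h2 : Commute u (b ^ j) := Commute.pow_right (r.b u).symm j
  have h3 : Commute u (h ^ n) := Commute.pow_right (r.h u).symm n
  have h4 : Commute u (w ^ l) := Commute.pow_right (r.w u).symm l
  have := h1.mul_right (h2.mul_right (h3.mul_right h4))
  rw [← mul_assoc, this.eq, mul_assoc]

variable (i j n l : ℕ) (c0 c1 c2 c3 c4 c5 : Bool)

theorem a_MM : a * MM a b e f g h t x y w i j n l c0 c1 c2 c3 c4 c5 =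
    MM a b e f g h t x y w (i+1) j n l c0 c1 c2 c3 c4 c5 := by
  simp only [MM, pow_succ', mul_assoc]

theorem b_MM (r : GRel a b e f g h t x y w) :
    b * MM a b e f g h t x y w i j n l c0 c1 c2 c3 c4 c5 =
    MM a b e f g h t x y w i (j+1) n l c0 c1 c2 c3 c4 c5 := by
  have h1 : ∀ z, b * (a ^ i * z) = a ^ i * (b * z) := fun z => by
    rw [← mul_assoc, r.b, mul_assoc]
  simp only [MM, pow_succ', mul_assoc, h1]

theorem h_MM (r : GRel a b e f g h t x y w) :
    h * MM a b e f g h t x y w i j n l c0 c1 c2 c3 c4 c5 =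
    MM a b e f g h t x y w i j (n+1) l c0 c1 c2 c3 c4 c5 := by
  have h1 : ∀ q z, h * (q * z) = q * (h * z) := fun q z => by
    rw [← mul_assoc, r.h, mul_assoc]
  simp only [MM, pow_succ', mul_assoc, h1 (a ^ i), h1 (b ^ j)]

theorem w_MM (r : GRel a b e f g h t x y w) :
    w * MM a b e f g h t x y w i j n l c0 c1 c2 c3 c4 c5 =
    MM a b e f g h t x y w i j n (l+1) c0 c1 c2 c3 c4 c5 := by
  have h1 : ∀ q z, w * (q * z) = q * (w * z) := fun q z => by
    rw [← mul_assoc, r.w, mul_assoc]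
  simp only [MM, pow_succ', mul_assoc, h1 (a ^ i), h1 (b ^ j), h1 (h ^ n)]

theorem e_MM (r : GRel a b e f g h t x y w) :
    e * MM a b e f g h t x y w i j n l c0 c1 c2 c3 c4 c5 =
    if c0 then 0 else MM a b e f g h t x y w i j n l true c1 c2 c3 c4 c5 := by
  rw [MM, comm_ev r, self_oF (u := e) (r.anti 0 0)]
  split_ifs <;> simp [MM]

theorem f_MM (r : GRel a b e f g h t x y w) :
    f * MM a b e f g h t x y w i j n l c0 c1 c2 c3 c4 c5 =
    if c1 then 0 else sg c0 • MM a b e f g h t x y w i j n l c0 true c2 c3 c4 c5 := by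
  rw [MM, comm_ev r, anti_oF (u := f) (v := e) (r.anti 1 0), self_oF (u := f) (r.anti 1 1)]
  split_ifs <;> simp [MM]

theorem g_MM (r : GRel a b e f g h t x y w) :
    g * MM a b e f g h t x y w i j n l c0 c1 c2 c3 c4 c5 =
    if c2 then 0 else (sg c0 * sg c1) •
      MM a b e f g h t x y w i j n l c0 c1 true c3 c4 c5 := by
  rw [MM, comm_ev r, anti_oF (u := g) (v := e) (r.anti 2 0), anti_oF (u := g) (v := f) (r.anti 2 1), self_oF (u := g) (r.anti 2 2)]
  split_ifs <;> simp [MM, mul_smul]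

theorem t_MM (r : GRel a b e f g h t x y w) :
    t * MM a b e f g h t x y w i j n l c0 c1 c2 c3 c4 c5 =
    if c3 then 0 else (sg c0 * sg c1 * sg c2) •
      MM a b e f g h t x y w i j n l c0 c1 c2 true c4 c5 := by
  rw [MM, comm_ev r, anti_oF (u := t) (v := e) (r.anti 3 0), anti_oF (u := t) (v := f) (r.anti 3 1), anti_oF (u := t) (v := g) (r.anti 3 2),
    self_oF (u := t) (r.anti 3 3)]
  split_ifs <;> simp [MM, mul_smul]

theorem x_MM (r : GRel a b e f g h t x y w) :
    x * MM a b e f g h t x y w i j n l c0 c1 c2 c3 c4 c5 =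
    if c4 then 0 else (sg c0 * sg c1 * sg c2 * sg c3) •
      MM a b e f g h t x y w i j n l c0 c1 c2 c3 true c5 := by
  rw [MM, comm_ev r, anti_oF (u := x) (v := e) (r.anti 4 0), anti_oF (u := x) (v := f) (r.anti 4 1), anti_oF (u := x) (v := g) (r.anti 4 2),
    anti_oF (u := x) (v := t) (r.anti 4 3), self_oF (u := x) (r.anti 4 4)]
  split_ifs <;> simp [MM, mul_smul]

theorem y_MM (r : GRel a b e f g h t x y w) :
    y * MM a b e f g h t x y w i j n l c0 c1 c2 c3 c4 c5 =
    if c5 then 0 else (sg c0 * sg c1 * sg c2 * sg c3 * sg c4) •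
      MM a b e f g h t x y w i j n l c0 c1 c2 c3 c4 true := by
  rw [MM, comm_ev r, anti_oF (u := y) (v := e) (r.anti 5 0), anti_oF (u := y) (v := f) (r.anti 5 1), anti_oF (u := y) (v := g) (r.anti 5 2),
    anti_oF (u := y) (v := t) (r.anti 5 3), anti_oF (u := y) (v := x) (r.anti 5 4), self_oF' (u := y) (r.anti 5 5)]
  split_ifs <;> simp [MM, mul_smul]

end

section
variable {A : Type*} [Ring A] [Algebra ℚ A] {a b e f g h t x y w : A}

theorem exists_lin (hfree : IsFreeGCA ![a, b, h, w] ![e, f, g, t, x, y])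
    {V : Type*} [AddCommGroup V] [Module ℚ V]
    (φ : ℕ → ℕ → ℕ → ℕ → Bool → Bool → Bool → Bool → Bool → Bool → V) :
    ∃ L : A →ₗ[ℚ] V, ∀ i j n l c0 c1 c2 c3 c4 c5,
      L (MM a b e f g h t x y w i j n l c0 c1 c2 c3 c4 c5) =
        φ i j n l c0 c1 c2 c3 c4 c5 := by
  let B := Module.Basis.mk hfree.li hfree.spanning.ge
  refine ⟨B.constr ℚ (fun m => φ (m.1 0) (m.1 1) (m.1 2) (m.1 3)
        (m.2 0) (m.2 1) (m.2 2) (m.2 3) (m.2 4) (m.2 5)), ?_⟩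
  intro i j n l c0 c1 c2 c3 c4 c5
  rw [MM_eq']
  have := Module.Basis.mk_apply hfree.li hfree.spanning.ge
    (![i, j, n, l], ![c0, c1, c2, c3, c4, c5])
  rw [← this, Module.Basis.constr_basis]
  rfl

theorem MM_ext (hfree : IsFreeGCA ![a, b, h, w] ![e, f, g, t, x, y])
    {V : Type*} [AddCommGroup V] [Module ℚ V] {L L' : A →ₗ[ℚ] V}
    (H : ∀ i j n l c0 c1 c2 c3 c4 c5,
      L (MM a b e f g h t x y w i j n l c0 c1 c2 c3 c4 c5) =
      L' (MM a b e f g h t x y w i j n l c0 c1 c2 c3 c4 c5)) : ∀ z, L z = L' z := by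
  have : L = L' := by
    refine LinearMap.ext_on hfree.spanning ?_
    rintro _ ⟨m, rfl⟩
    rw [MM_eq]; apply H
  intro z; rw [this]

/-- induction principle -/
theorem sub_top (hfree : IsFreeGCA ![a, b, h, w] ![e, f, g, t, x, y]) (S : Submodule ℚ A)
    (h1 : 1 ∈ S) (ha : ∀ z ∈ S, a * z ∈ S) (hb : ∀ z ∈ S, b * z ∈ S)
    (hh : ∀ z ∈ S, h * z ∈ S) (hw : ∀ z ∈ S, w * z ∈ S) (he : ∀ z ∈ S, e * z ∈ S)
    (hf : ∀ z ∈ S, f * z ∈ S) (hg : ∀ z ∈ S, g * z ∈ S) (ht : ∀ z ∈ S, t * z ∈ S)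
    (hx : ∀ z ∈ S, x * z ∈ S) (hy : ∀ z ∈ S, y * z ∈ S) : ∀ z, z ∈ S := by
  have hp : ∀ u : A, (∀ z ∈ S, u * z ∈ S) → ∀ n : ℕ, ∀ z ∈ S, u ^ n * z ∈ S := by
    intro u hu n
    induction n with
    | zero => intro z hz; simpa using hz
    | succ n ih => intro z hz; rw [pow_succ', mul_assoc]; exact hu _ (ih z hz)
  have ho : ∀ u : A, (∀ z ∈ S, u * z ∈ S) → ∀ c : Bool, ∀ z ∈ S, oF u c * z ∈ S := by
    intro u hu c z hz
    cases c
    · simpa [oF] using hz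
    · simpa [oF] using hu z hz
  have : Submodule.span ℚ (Set.range (gcMon ![a, b, h, w] ![e, f, g, t, x, y])) ≤ S := by
    rw [Submodule.span_le]
    rintro _ ⟨m, rfl⟩
    rw [MM_eq, MM]
    simp only [mul_assoc]
    have hy' := ho y hy (m.2 5) 1 h1
    rw [mul_one] at hy'
    exact hp a ha _ _ (hp b hb _ _ (hp h hh _ _ (hp w hw _ _ (ho e he _ _ (ho f hf _ _
      (ho g hg _ _ (ho t ht _ _ (ho x hx _ _ hy'))))))))
  intro z
  rw [hfree.spanning] at this
  exact this trivial

theorem one_eq_MM : (1 : A) = MM a b e f g h t x y w 0 0 0 0 false false false false false false := by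
  simp [MM, oF]

end


section
variable {A : Type*} [Ring A] [Algebra ℚ A] {a b e f g h t x y w : A}

theorem sg_sq (c : Bool) : sg c * sg c = 1 := by cases c <;> simp [sg]

theorem exists_Da (hfree : IsFreeGCA ![a, b, h, w] ![e, f, g, t, x, y]) :
    ∃ D : A →ₗ[ℚ] A, D 1 = 0 ∧ (∀ z, D (a * z) = z + a * D z) ∧ (∀ z, D (b * z) = b * D z) ∧
      (∀ z, D (h * z) = h * D z) ∧ (∀ z, D (w * z) = w * D z) ∧
      (∀ z, D (e * z) = e * D z) ∧ (∀ z, D (f * z) = f * D z) ∧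
      (∀ z, D (g * z) = g * D z) ∧ (∀ z, D (t * z) = t * D z) ∧
      (∀ z, D (x * z) = x * D z) ∧ (∀ z, D (y * z) = y * D z) := by
  obtain ⟨D, hD⟩ := exists_lin hfree (fun i j n l c0 c1 c2 c3 c4 c5 =>
    (i : ℚ) • MM a b e f g h t x y w (i-1) j n l c0 c1 c2 c3 c4 c5)
  have r := hfree.rel
  have key : ∀ u : A, (∀ i j n l c0 c1 c2 c3 c4 c5,
      D (u * MM a b e f g h t x y w i j n l c0 c1 c2 c3 c4 c5) =
      u * D (MM a b e f g h t x y w i j n l c0 c1 c2 c3 c4 c5)) → ∀ z, D (u * z) = u * D z := by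
    intro u hu
    exact MM_ext hfree (L := D ∘ₗ LinearMap.mulLeft ℚ u) (L' := LinearMap.mulLeft ℚ u ∘ₗ D) hu
  refine ⟨D, ?_, ?_, key b ?_, key h ?_, key w ?_, key e ?_, key f ?_, key g ?_, key t ?_,
    key x ?_, key y ?_⟩
  · rw [one_eq_MM (a := a) (b := b) (e := e) (f := f) (g := g) (h := h) (t := t) (x := x)
      (y := y) (w := w), hD]; simp
  · refine MM_ext hfree (L := D ∘ₗ LinearMap.mulLeft ℚ a)
      (L' := LinearMap.id + LinearMap.mulLeft ℚ a ∘ₗ D) ?_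
    intro i j n l c0 c1 c2 c3 c4 c5
    simp only [LinearMap.comp_apply, LinearMap.mulLeft_apply, LinearMap.add_apply,
      LinearMap.id_apply, a_MM, hD, mul_smul_comm]
    cases i <;> simp [add_smul, add_comm]
  all_goals
    intro i j n l c0 c1 c2 c3 c4 c5
    simp only [b_MM _ _ _ _ _ _ _ _ _ _ r, h_MM _ _ _ _ _ _ _ _ _ _ r,
      w_MM _ _ _ _ _ _ _ _ _ _ r, e_MM _ _ _ _ _ _ _ _ _ _ r, f_MM _ _ _ _ _ _ _ _ _ _ r,
      g_MM _ _ _ _ _ _ _ _ _ _ r, t_MM _ _ _ _ _ _ _ _ _ _ r, x_MM _ _ _ _ _ _ _ _ _ _ r,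
      y_MM _ _ _ _ _ _ _ _ _ _ r, hD, mul_smul_comm]
    try (split_ifs <;> simp [hD, smul_smul, mul_comm])

theorem exists_Db (hfree : IsFreeGCA ![a, b, h, w] ![e, f, g, t, x, y]) :
    ∃ D : A →ₗ[ℚ] A, D 1 = 0 ∧ (∀ z, D (b * z) = z + b * D z) ∧ (∀ z, D (a * z) = a * D z) ∧
      (∀ z, D (h * z) = h * D z) ∧ (∀ z, D (w * z) = w * D z) ∧
      (∀ z, D (e * z) = e * D z) ∧ (∀ z, D (f * z) = f * D z) ∧
      (∀ z, D (g * z) = g * D z) ∧ (∀ z, D (t * z) = t * D z) ∧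
      (∀ z, D (x * z) = x * D z) ∧ (∀ z, D (y * z) = y * D z) := by
  obtain ⟨D, hD⟩ := exists_lin hfree (fun i j n l c0 c1 c2 c3 c4 c5 =>
    (j : ℚ) • MM a b e f g h t x y w i (j-1) n l c0 c1 c2 c3 c4 c5)
  have r := hfree.rel
  have key : ∀ u : A, (∀ i j n l c0 c1 c2 c3 c4 c5,
      D (u * MM a b e f g h t x y w i j n l c0 c1 c2 c3 c4 c5) =
      u * D (MM a b e f g h t x y w i j n l c0 c1 c2 c3 c4 c5)) → ∀ z, D (u * z) = u * D z := by
    intro u hu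
    exact MM_ext hfree (L := D ∘ₗ LinearMap.mulLeft ℚ u) (L' := LinearMap.mulLeft ℚ u ∘ₗ D) hu
  refine ⟨D, ?_, ?_, key a ?_, key h ?_, key w ?_, key e ?_, key f ?_, key g ?_, key t ?_,
    key x ?_, key y ?_⟩
  · rw [one_eq_MM (a := a) (b := b) (e := e) (f := f) (g := g) (h := h) (t := t) (x := x)
      (y := y) (w := w), hD]; simp
  · refine MM_ext hfree (L := D ∘ₗ LinearMap.mulLeft ℚ b)
      (L' := LinearMap.id + LinearMap.mulLeft ℚ b ∘ₗ D) ?_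
    intro i j n l c0 c1 c2 c3 c4 c5
    simp only [LinearMap.comp_apply, LinearMap.mulLeft_apply, LinearMap.add_apply,
      LinearMap.id_apply, b_MM _ _ _ _ _ _ _ _ _ _ r, hD, mul_smul_comm]
    cases j <;> simp [add_smul, add_comm]
  all_goals
    intro i j n l c0 c1 c2 c3 c4 c5
    simp only [a_MM, h_MM _ _ _ _ _ _ _ _ _ _ r,
      w_MM _ _ _ _ _ _ _ _ _ _ r, e_MM _ _ _ _ _ _ _ _ _ _ r, f_MM _ _ _ _ _ _ _ _ _ _ r,
      g_MM _ _ _ _ _ _ _ _ _ _ r, t_MM _ _ _ _ _ _ _ _ _ _ r, x_MM _ _ _ _ _ _ _ _ _ _ r,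
      y_MM _ _ _ _ _ _ _ _ _ _ r, hD, mul_smul_comm]
    try (split_ifs <;> simp [hD, smul_smul, mul_comm])

theorem exists_Dh (hfree : IsFreeGCA ![a, b, h, w] ![e, f, g, t, x, y]) :
    ∃ D : A →ₗ[ℚ] A, D 1 = 0 ∧ (∀ z, D (h * z) = z + h * D z) ∧ (∀ z, D (a * z) = a * D z) ∧
      (∀ z, D (b * z) = b * D z) ∧ (∀ z, D (w * z) = w * D z) ∧
      (∀ z, D (e * z) = e * D z) ∧ (∀ z, D (f * z) = f * D z) ∧
      (∀ z, D (g * z) = g * D z) ∧ (∀ z, D (t * z) = t * D z) ∧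
      (∀ z, D (x * z) = x * D z) ∧ (∀ z, D (y * z) = y * D z) := by
  obtain ⟨D, hD⟩ := exists_lin hfree (fun i j n l c0 c1 c2 c3 c4 c5 =>
    (n : ℚ) • MM a b e f g h t x y w i j (n-1) l c0 c1 c2 c3 c4 c5)
  have r := hfree.rel
  have key : ∀ u : A, (∀ i j n l c0 c1 c2 c3 c4 c5,
      D (u * MM a b e f g h t x y w i j n l c0 c1 c2 c3 c4 c5) =
      u * D (MM a b e f g h t x y w i j n l c0 c1 c2 c3 c4 c5)) → ∀ z, D (u * z) = u * D z := by
    intro u hu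
    exact MM_ext hfree (L := D ∘ₗ LinearMap.mulLeft ℚ u) (L' := LinearMap.mulLeft ℚ u ∘ₗ D) hu
  refine ⟨D, ?_, ?_, key a ?_, key b ?_, key w ?_, key e ?_, key f ?_, key g ?_, key t ?_,
    key x ?_, key y ?_⟩
  · rw [one_eq_MM (a := a) (b := b) (e := e) (f := f) (g := g) (h := h) (t := t) (x := x)
      (y := y) (w := w), hD]; simp
  · refine MM_ext hfree (L := D ∘ₗ LinearMap.mulLeft ℚ h)
      (L' := LinearMap.id + LinearMap.mulLeft ℚ h ∘ₗ D) ?_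
    intro i j n l c0 c1 c2 c3 c4 c5
    simp only [LinearMap.comp_apply, LinearMap.mulLeft_apply, LinearMap.add_apply,
      LinearMap.id_apply, h_MM _ _ _ _ _ _ _ _ _ _ r, hD, mul_smul_comm]
    cases n <;> simp [add_smul, add_comm]
  all_goals
    intro i j n l c0 c1 c2 c3 c4 c5
    simp only [a_MM, b_MM _ _ _ _ _ _ _ _ _ _ r,
      w_MM _ _ _ _ _ _ _ _ _ _ r, e_MM _ _ _ _ _ _ _ _ _ _ r, f_MM _ _ _ _ _ _ _ _ _ _ r,
      g_MM _ _ _ _ _ _ _ _ _ _ r, t_MM _ _ _ _ _ _ _ _ _ _ r, x_MM _ _ _ _ _ _ _ _ _ _ r,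
      y_MM _ _ _ _ _ _ _ _ _ _ r, hD, mul_smul_comm]
    try (split_ifs <;> simp [hD, smul_smul, mul_comm])

theorem exists_Dg (hfree : IsFreeGCA ![a, b, h, w] ![e, f, g, t, x, y]) :
    ∃ D : A →ₗ[ℚ] A, D 1 = 0 ∧ (∀ z, D (g * z) = z - g * D z) ∧ (∀ z, D (a * z) = a * D z) ∧
      (∀ z, D (b * z) = b * D z) ∧ (∀ z, D (h * z) = h * D z) ∧ (∀ z, D (w * z) = w * D z) ∧
      (∀ z, D (e * z) = -(e * D z)) ∧ (∀ z, D (f * z) = -(f * D z)) ∧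
      (∀ z, D (t * z) = -(t * D z)) ∧
      (∀ z, D (x * z) = -(x * D z)) ∧ (∀ z, D (y * z) = -(y * D z)) := by
  obtain ⟨D, hD⟩ := exists_lin hfree (fun i j n l c0 c1 c2 c3 c4 c5 =>
    if c2 then (sg c0 * sg c1) • MM a b e f g h t x y w i j n l c0 c1 false c3 c4 c5 else 0)
  have r := hfree.rel
  have key : ∀ u : A, (∀ i j n l c0 c1 c2 c3 c4 c5,
      D (u * MM a b e f g h t x y w i j n l c0 c1 c2 c3 c4 c5) =
      u * D (MM a b e f g h t x y w i j n l c0 c1 c2 c3 c4 c5)) → ∀ z, D (u * z) = u * D z := by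
    intro u hu
    exact MM_ext hfree (L := D ∘ₗ LinearMap.mulLeft ℚ u) (L' := LinearMap.mulLeft ℚ u ∘ₗ D) hu
  have key' : ∀ u : A, (∀ i j n l c0 c1 c2 c3 c4 c5,
      D (u * MM a b e f g h t x y w i j n l c0 c1 c2 c3 c4 c5) =
      -(u * D (MM a b e f g h t x y w i j n l c0 c1 c2 c3 c4 c5))) →
      ∀ z, D (u * z) = -(u * D z) := by
    intro u hu
    exact MM_ext hfree (L := D ∘ₗ LinearMap.mulLeft ℚ u)
      (L' := -(LinearMap.mulLeft ℚ u ∘ₗ D)) hu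
  refine ⟨D, ?_, ?_, key a ?_, key b ?_, key h ?_, key w ?_, key' e ?_, key' f ?_, key' t ?_,
    key' x ?_, key' y ?_⟩
  · rw [one_eq_MM (a := a) (b := b) (e := e) (f := f) (g := g) (h := h) (t := t) (x := x)
      (y := y) (w := w), hD]; simp
  · refine MM_ext hfree (L := D ∘ₗ LinearMap.mulLeft ℚ g)
      (L' := LinearMap.id - LinearMap.mulLeft ℚ g ∘ₗ D) ?_
    intro i j n l c0 c1 c2 c3 c4 c5
    simp only [LinearMap.comp_apply, LinearMap.mulLeft_apply, LinearMap.sub_apply,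
      LinearMap.id_apply, g_MM _ _ _ _ _ _ _ _ _ _ r, hD, mul_smul_comm]
    cases c2 <;> cases c0 <;> cases c1 <;> simp [hD, sg, g_MM _ _ _ _ _ _ _ _ _ _ r]
  all_goals
    intro i j n l c0 c1 c2 c3 c4 c5
    simp only [a_MM, b_MM _ _ _ _ _ _ _ _ _ _ r, h_MM _ _ _ _ _ _ _ _ _ _ r,
      w_MM _ _ _ _ _ _ _ _ _ _ r, e_MM _ _ _ _ _ _ _ _ _ _ r, f_MM _ _ _ _ _ _ _ _ _ _ r,
      g_MM _ _ _ _ _ _ _ _ _ _ r, t_MM _ _ _ _ _ _ _ _ _ _ r, x_MM _ _ _ _ _ _ _ _ _ _ r,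
      y_MM _ _ _ _ _ _ _ _ _ _ r, hD, mul_smul_comm]
    cases c0 <;> cases c1 <;> cases c2 <;> cases c3 <;> cases c4 <;>
      simp [hD, sg, e_MM _ _ _ _ _ _ _ _ _ _ r, f_MM _ _ _ _ _ _ _ _ _ _ r,
      t_MM _ _ _ _ _ _ _ _ _ _ r, x_MM _ _ _ _ _ _ _ _ _ _ r,
      a_MM, b_MM _ _ _ _ _ _ _ _ _ _ r, h_MM _ _ _ _ _ _ _ _ _ _ r,
      w_MM _ _ _ _ _ _ _ _ _ _ r, y_MM _ _ _ _ _ _ _ _ _ _ r]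
  all_goals (cases c5 <;> simp [hD, sg])

end


section
variable {A : Type*} [Ring A] [Algebra ℚ A] {a b e f g h t x y w : A}

theorem GRel.oc (r : GRel a b e f g h t x y w) (i j : Fin 6) (z : A) :
    ![e, f, g, t, x, y] i * (![e, f, g, t, x, y] j * z) =
    -(![e, f, g, t, x, y] j * (![e, f, g, t, x, y] i * z)) := by
  rw [← mul_assoc, r.anti, neg_mul, mul_assoc]

theorem GRel.ac (r : GRel a b e f g h t x y w) (u z : A) : u * (a * z) = a * (u * z) := by
  rw [← mul_assoc, ← r.a, mul_assoc]
theorem GRel.bc (r : GRel a b e f g h t x y w) (u z : A) : u * (b * z) = b * (u * z) := by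
  rw [← mul_assoc, ← r.b, mul_assoc]
theorem GRel.hc (r : GRel a b e f g h t x y w) (u z : A) : u * (h * z) = h * (u * z) := by
  rw [← mul_assoc, ← r.h, mul_assoc]
theorem GRel.wc (r : GRel a b e f g h t x y w) (u z : A) : u * (w * z) = w * (u * z) := by
  rw [← mul_assoc, ← r.w, mul_assoc]

/-- multiplication rules for the homotopy -/
structure SRules (a b e f g h t x y w : A) (k : ℚ) (s : A →ₗ[ℚ] A) : Prop where
  sone : s 1 = 0
  sa : ∀ z, s (a * z) = x * z + a * s z
  sb : ∀ z, s (b * z) = y * z + b * s z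
  sh : ∀ z, s (h * z) = k • (y * (w * z)) + h * s z
  sw : ∀ z, s (w * z) = w * s z
  sg : ∀ z, s (g * z) = w * z - g * s z
  se : ∀ z, s (e * z) = -(e * s z)
  sf : ∀ z, s (f * z) = -(f * s z)
  st : ∀ z, s (t * z) = -(t * s z)
  sx : ∀ z, s (x * z) = -(x * s z)
  sy : ∀ z, s (y * z) = -(y * s z)

theorem exists_s (hfree : IsFreeGCA ![a, b, h, w] ![e, f, g, t, x, y]) (k : ℚ) :
    ∃ s : A →ₗ[ℚ] A, SRules a b e f g h t x y w k s := by
  have r := hfree.rel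
  obtain ⟨D1, o1, a1, b1, h1, w1, e1, f1, g1, t1, x1, y1⟩ := exists_Da hfree
  obtain ⟨D2, o2, b2, a2, h2, w2, e2, f2, g2, t2, x2, y2⟩ := exists_Db hfree
  obtain ⟨D3, o3, h3, a3, b3, w3, e3, f3, g3, t3, x3, y3⟩ := exists_Dh hfree
  obtain ⟨D4, o4, g4, a4, b4, h4, w4, e4, f4, t4, x4, y4⟩ := exists_Dg hfree
  have xe : ∀ z, x * (e * z) = -(e * (x * z)) := r.oc 4 0
  have xf : ∀ z, x * (f * z) = -(f * (x * z)) := r.oc 4 1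
  have xg : ∀ z, x * (g * z) = -(g * (x * z)) := r.oc 4 2
  have xt : ∀ z, x * (t * z) = -(t * (x * z)) := r.oc 4 3
  have xy : ∀ z, x * (y * z) = -(y * (x * z)) := r.oc 4 5
  have ye : ∀ z, y * (e * z) = -(e * (y * z)) := r.oc 5 0
  have yf : ∀ z, y * (f * z) = -(f * (y * z)) := r.oc 5 1
  have yg : ∀ z, y * (g * z) = -(g * (y * z)) := r.oc 5 2
  have yt : ∀ z, y * (t * z) = -(t * (y * z)) := r.oc 5 3
  have xx : x * x = 0 := sq_zero_of_anti (r.anti 4 4)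
  have yy : y * y = 0 := sq_zero_of_anti (r.anti 5 5)
  have xx' : ∀ z, x * (x * z) = 0 := fun z => by rw [← mul_assoc, xx, zero_mul]
  have yy' : ∀ z, y * (y * z) = 0 := fun z => by rw [← mul_assoc, yy, zero_mul]
  refine ⟨LinearMap.mulLeft ℚ x ∘ₗ D1 + LinearMap.mulLeft ℚ y ∘ₗ D2 +
    k • (LinearMap.mulLeft ℚ w ∘ₗ LinearMap.mulLeft ℚ y ∘ₗ D3) + LinearMap.mulLeft ℚ w ∘ₗ D4,
    ?_, ?_, ?_, ?_, ?_, ?_, ?_, ?_, ?_, ?_, ?_⟩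
  all_goals
    simp [*, mul_add, mul_sub, r.ac x, r.ac y, r.ac w, r.bc x, r.bc y, r.bc w, r.hc x, r.hc y,
      r.hc w, r.wc x, r.wc y, r.wc e, r.wc f, r.wc g, r.wc t, -mul_eq_zero]
  all_goals (intro z; abel)
end


section
variable {A : Type*} [Ring A] [Algebra ℚ A] {a b e f g h t x y w : A}

theorem gcDeg_eq (p : (Fin 4 → ℕ) × (Fin 6 → Bool)) :
    gcDeg ![2, 2, 4, 2] ![3, 3, 3, 1, 1, 1] p =
    2 * p.1 0 + 2 * p.1 1 + 4 * p.1 2 + 2 * p.1 3 + (if p.2 0 then 3 else 0) +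
      (if p.2 1 then 3 else 0) + (if p.2 2 then 3 else 0) + (if p.2 3 then 1 else 0) +
      (if p.2 4 then 1 else 0) + (if p.2 5 then 1 else 0) := by
  simp [gcDeg, Fin.sum_univ_succ, Fin.succ]
  ring

theorem mem_MM (i j n l : ℕ) (c0 c1 c2 c3 c4 c5 : Bool) (m : ℕ)
    (hm : 2 * i + 2 * j + 4 * n + 2 * l + (if c0 then 3 else 0) + (if c1 then 3 else 0) +
      (if c2 then 3 else 0) + (if c3 then 1 else 0) + (if c4 then 1 else 0) +
      (if c5 then 1 else 0) = m) :
    MM a b e f g h t x y w i j n l c0 c1 c2 c3 c4 c5 ∈ gradeLC a b e f g h t x y w m := by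
  rw [MM_eq']
  refine Submodule.subset_span ⟨_, ?_, rfl⟩
  exact (gcDeg_eq _).trans hm

theorem mul_grade (u : A) (q : ℕ)
    (H : ∀ i j n l c0 c1 c2 c3 c4 c5 m, 2 * i + 2 * j + 4 * n + 2 * l +
      (if c0 then 3 else 0) + (if c1 then 3 else 0) +
      (if c2 then 3 else 0) + (if c3 then 1 else 0) + (if c4 then 1 else 0) +
      (if c5 then 1 else 0) = m →
      u * MM a b e f g h t x y w i j n l c0 c1 c2 c3 c4 c5 ∈
        gradeLC a b e f g h t x y w (m + q)) (m : ℕ) (z : A)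
    (hz : z ∈ gradeLC a b e f g h t x y w m) :
    u * z ∈ gradeLC a b e f g h t x y w (m + q) := by
  have : gradeLC a b e f g h t x y w m ≤
      (gradeLC a b e f g h t x y w (m + q)).comap (LinearMap.mulLeft ℚ u) := by
    unfold gradeLC at *
    unfold gcGrade
    rw [Submodule.span_le]
    rintro _ ⟨p, hp, rfl⟩
    rw [MM_eq]
    refine H _ _ _ _ _ _ _ _ _ _ m ?_
    rw [Set.mem_ofPred_eq] at hp
    rw [← hp]
    exact (gcDeg_eq p).symm
  exact this hz

/-- degrees -/
structure Degs (a b e f g h t x y w : A) : Prop where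
  one : (1 : A) ∈ gradeLC a b e f g h t x y w 0
  ga : ∀ m z, z ∈ gradeLC a b e f g h t x y w m → a * z ∈ gradeLC a b e f g h t x y w (m + 2)
  gb : ∀ m z, z ∈ gradeLC a b e f g h t x y w m → b * z ∈ gradeLC a b e f g h t x y w (m + 2)
  gh : ∀ m z, z ∈ gradeLC a b e f g h t x y w m → h * z ∈ gradeLC a b e f g h t x y w (m + 4)
  gw : ∀ m z, z ∈ gradeLC a b e f g h t x y w m → w * z ∈ gradeLC a b e f g h t x y w (m + 2)
  ge : ∀ m z, z ∈ gradeLC a b e f g h t x y w m → e * z ∈ gradeLC a b e f g h t x y w (m + 3)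
  gf : ∀ m z, z ∈ gradeLC a b e f g h t x y w m → f * z ∈ gradeLC a b e f g h t x y w (m + 3)
  gg : ∀ m z, z ∈ gradeLC a b e f g h t x y w m → g * z ∈ gradeLC a b e f g h t x y w (m + 3)
  gt : ∀ m z, z ∈ gradeLC a b e f g h t x y w m → t * z ∈ gradeLC a b e f g h t x y w (m + 1)
  gx : ∀ m z, z ∈ gradeLC a b e f g h t x y w m → x * z ∈ gradeLC a b e f g h t x y w (m + 1)
  gy : ∀ m z, z ∈ gradeLC a b e f g h t x y w m → y * z ∈ gradeLC a b e f g h t x y w (m + 1)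

theorem degs (r : GRel a b e f g h t x y w) : Degs a b e f g h t x y w := by
  refine ⟨?_, mul_grade _ _ ?_, mul_grade _ _ ?_, mul_grade _ _ ?_, mul_grade _ _ ?_,
    mul_grade _ _ ?_, mul_grade _ _ ?_, mul_grade _ _ ?_, mul_grade _ _ ?_,
    mul_grade _ _ ?_, mul_grade _ _ ?_⟩
  · rw [one_eq_MM (a := a) (b := b) (e := e) (f := f) (g := g) (h := h) (t := t) (x := x)
      (y := y) (w := w)]
    exact mem_MM _ _ _ _ _ _ _ _ _ _ _ (by simp)
  all_goals
    intro i j n l c0 c1 c2 c3 c4 c5 m hm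
    simp only [a_MM, b_MM _ _ _ _ _ _ _ _ _ _ r, h_MM _ _ _ _ _ _ _ _ _ _ r,
      w_MM _ _ _ _ _ _ _ _ _ _ r, e_MM _ _ _ _ _ _ _ _ _ _ r, f_MM _ _ _ _ _ _ _ _ _ _ r,
      g_MM _ _ _ _ _ _ _ _ _ _ r, t_MM _ _ _ _ _ _ _ _ _ _ r, x_MM _ _ _ _ _ _ _ _ _ _ r,
      y_MM _ _ _ _ _ _ _ _ _ _ r]
    first
    | exact mem_MM _ _ _ _ _ _ _ _ _ _ _ (by linarith)
    | (split_ifs with hc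
       · exact Submodule.zero_mem _
       · first
         | exact mem_MM _ _ _ _ _ _ _ _ _ _ _ (by simp [hc] at hm ⊢; linarith)
         | exact Submodule.smul_mem _ _
            (mem_MM _ _ _ _ _ _ _ _ _ _ _ (by simp [hc] at hm ⊢; linarith)))

/-- multiplication rules for the differential -/
structure DRules (a b e f g h t x y w : A) (k : ℚ) (d : A →ₗ[ℚ] A) : Prop where
  done : d 1 = 0
  da : ∀ z, d (a * z) = a * d z
  db : ∀ z, d (b * z) = b * d z
  dh : ∀ z, d (h * z) = k • (b * (g * z)) + h * d z
  dw : ∀ z, d (w * z) = g * z + w * d z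
  de : ∀ z, d (e * z) = a * (a * z) - e * d z
  df : ∀ z, d (f * z) = b * (b * z) - f * d z
  dg : ∀ z, d (g * z) = - (g * d z)
  dt : ∀ z, d (t * z) = - (t * d z)
  dx : ∀ z, d (x * z) = a * z - x * d z
  dy : ∀ z, d (y * z) = b * z - y * d z

theorem drules (r : GRel a b e f g h t x y w) (k : ℚ) (d : A →ₗ[ℚ] A)
    (hleib : ∀ (m : ℕ) (z z' : A), z ∈ gradeLC a b e f g h t x y w m →
      d (z * z') = d z * z' + ((-1 : ℚ) ^ m) • (z * d z'))
    (hda : d a = 0) (hdb : d b = 0) (hdg : d g = 0)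
    (hde : d e = a * a) (hdf : d f = b * b) (hdh : d h = k • (b * g))
    (hdt : d t = 0) (hdx : d x = a) (hdy : d y = b) (hdw : d w = g) :
    DRules a b e f g h t x y w k d := by
  have D := degs r
  have ga := D.ga 0 1 D.one
  have gb := D.gb 0 1 D.one
  have gh := D.gh 0 1 D.one
  have gw := D.gw 0 1 D.one
  have ge := D.ge 0 1 D.one
  have gf := D.gf 0 1 D.one
  have gg := D.gg 0 1 D.one
  have gt := D.gt 0 1 D.one
  have gx := D.gx 0 1 D.one
  have gy := D.gy 0 1 D.one
  rw [mul_one] at ga gb gh gw ge gf gg gt gx gy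
  refine ⟨?_, fun z => ?_, fun z => ?_, fun z => ?_, fun z => ?_, fun z => ?_, fun z => ?_,
    fun z => ?_, fun z => ?_, fun z => ?_, fun z => ?_⟩
  · have := hleib 0 1 1 D.one
    simpa using this
  · rw [hleib _ _ _ ga, hda]; norm_num
  · rw [hleib _ _ _ gb, hdb]; norm_num
  · rw [hleib _ _ _ gh, hdh]; norm_num [mul_assoc]
  · rw [hleib _ _ _ gw, hdw]; norm_num
  · rw [hleib _ _ _ ge, hde]; norm_num [mul_assoc, pow_succ, sub_eq_add_neg]
  · rw [hleib _ _ _ gf, hdf]; norm_num [mul_assoc, pow_succ, sub_eq_add_neg]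
  · rw [hleib _ _ _ gg, hdg]; norm_num [mul_assoc, pow_succ, sub_eq_add_neg]
  · rw [hleib _ _ _ gt, hdt]; norm_num [mul_assoc, pow_succ, sub_eq_add_neg]
  · rw [hleib _ _ _ gx, hdx]; norm_num [mul_assoc, pow_succ, sub_eq_add_neg]
  · rw [hleib _ _ _ gy, hdy]; norm_num [mul_assoc, pow_succ, sub_eq_add_neg]

theorem dd_zero (hfree : IsFreeGCA ![a, b, h, w] ![e, f, g, t, x, y]) {k : ℚ} {d : A →ₗ[ℚ] A}
    (D : DRules a b e f g h t x y w k d) (z : A) : d (d z) = 0 := by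
  obtain ⟨d1, da, db, dh, dw, de, df, dg, dt, dx, dy⟩ := D
  have := sub_top hfree (LinearMap.ker (d ∘ₗ d)) (by simp [d1])
  simp only [LinearMap.mem_ker, LinearMap.comp_apply] at this
  apply this
  all_goals (intro z hz; simp [*, mul_assoc])

/-- The quotient projection onto the monomials in `t, e, f, h`. -/
theorem exists_Phi (hfree : IsFreeGCA ![a, b, h, w] ![e, f, g, t, x, y]) :
    ∃ Φ : A →ₗ[ℚ] ((Bool × Bool × Bool) × ℕ →₀ ℚ), (∀ z, Φ (a * z) = 0) ∧
      (∀ z, Φ (b * z) = 0) ∧ (∀ z, Φ (g * z) = 0) ∧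
      ∀ n c3 c0 c1, Φ (oF t c3 * (oF e c0 * (oF f c1 * h ^ n))) =
        Finsupp.single ((c3, c0, c1), n) 1 := by
  have r := hfree.rel
  obtain ⟨Φ, hΦ⟩ := exists_lin hfree (fun i j n l c0 c1 c2 c3 c4 c5 =>
    if i = 0 ∧ j = 0 ∧ l = 0 ∧ c2 = false ∧ c4 = false ∧ c5 = false then
      (if c3 then sg c0 * sg c1 else 1) •
        Finsupp.single (((c3, c0, c1), n) : (Bool × Bool × Bool) × ℕ) (1 : ℚ) else 0)
  refine ⟨Φ, ?_, ?_, ?_, ?_⟩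
  · refine MM_ext hfree (L := Φ ∘ₗ LinearMap.mulLeft ℚ a) (L' := 0) ?_
    intros; simp [a_MM, hΦ]
  · refine MM_ext hfree (L := Φ ∘ₗ LinearMap.mulLeft ℚ b) (L' := 0) ?_
    intros; simp [b_MM _ _ _ _ _ _ _ _ _ _ r, hΦ]
  · refine MM_ext hfree (L := Φ ∘ₗ LinearMap.mulLeft ℚ g) (L' := 0) ?_
    intro i j n l c0 c1 c2 c3 c4 c5
    cases c2 <;> simp [g_MM _ _ _ _ _ _ _ _ _ _ r, hΦ]
  · intro n c3 c0 c1
    have h0 : h ^ n = MM a b e f g h t x y w 0 0 n 0 false false false false false false := by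
      simp [MM, oF]
    rw [h0]
    cases c3 <;> cases c0 <;> cases c1 <;>
      simp [oF, e_MM _ _ _ _ _ _ _ _ _ _ r, f_MM _ _ _ _ _ _ _ _ _ _ r,
        t_MM _ _ _ _ _ _ _ _ _ _ r, hΦ, sg]

end


section
variable {A : Type*} [Ring A] [Algebra ℚ A] {a b e f g h t x y w : A}

/-- relations between the new generators -/
theorem newrel (r : GRel a b e f g h t x y w) (k : ℚ) :
    t * t = 0 ∧ (e - x * a) * (e - x * a) = 0 ∧ (f - y * b) * (f - y * b) = 0 ∧
    t * (e - x * a) = -((e - x * a) * t) ∧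
    t * (f - y * b) = -((f - y * b) * t) ∧
    (e - x * a) * (f - y * b) = -((f - y * b) * (e - x * a)) ∧
    ∀ z, Commute (h - k • (b * w)) z := by
  have oc := r.oc
  have an := r.anti
  have ee : e * e = 0 := sq_zero_of_anti (r.anti 0 0)
  have ff : f * f = 0 := sq_zero_of_anti (r.anti 1 1)
  have tt : t * t = 0 := sq_zero_of_anti (r.anti 3 3)
  have xx : x * x = 0 := sq_zero_of_anti (r.anti 4 4)
  have yy : y * y = 0 := sq_zero_of_anti (r.anti 5 5)
  have te : t * e = -(e * t) := r.anti 3 0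
  have tf : t * f = -(f * t) := r.anti 3 1
  have fe : f * e = -(e * f) := r.anti 1 0
  have xe : x * e = -(e * x) := r.anti 4 0
  have xf : x * f = -(f * x) := r.anti 4 1
  have xt : x * t = -(t * x) := r.anti 4 3
  have ye : y * e = -(e * y) := r.anti 5 0
  have yf : y * f = -(f * y) := r.anti 5 1
  have yt : y * t = -(t * y) := r.anti 5 3
  have yx : y * x = -(x * y) := r.anti 5 4
  have ha : ∀ z, z * a = a * z := fun z => (r.a z).symm
  have hb : ∀ z, z * b = b * z := fun z => (r.b z).symm
  refine ⟨tt, ?_, ?_, ?_, ?_, ?_, ?_⟩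
  · simp only [ha x, mul_sub, sub_mul, mul_assoc, r.ac e, r.ac x, ee, xx, xe]
    simp
  · simp only [hb y, mul_sub, sub_mul, mul_assoc, r.bc f, r.bc y, ff, yy, yf]
    simp
  · simp only [ha x, mul_sub, sub_mul, mul_assoc, r.ac t, te, xt]
    simp; abel
  · simp only [hb y, mul_sub, sub_mul, mul_assoc, r.bc t, tf, yt]
    simp; abel
  · simp only [ha x, hb y, mul_sub, sub_mul, mul_assoc, r.ac f, r.ac y, r.bc e, r.bc x, r.bc a,
      fe, xf, ye, yx]
    simp; abel
  · intro z
    refine Commute.sub_left (r.h z) (Commute.smul_left ?_ k)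
    exact Commute.mul_left (r.b z) (r.w z)

/-- The properties of the operators used in the final argument. -/
structure Core (a b e f g h t x y w : A) (k : ℚ) (d s N : A →ₗ[ℚ] A) : Prop where
  none : N 1 = 0
  na : ∀ z, N (a * z) = a * z + a * N z
  nb : ∀ z, N (b * z) = b * z + b * N z
  nw : ∀ z, N (w * z) = w * z + w * N z
  ng : ∀ z, N (g * z) = g * z + g * N z
  nx : ∀ z, N (x * z) = x * z + x * N z
  ny : ∀ z, N (y * z) = y * z + y * N z
  nt : ∀ z, N (t * z) = t * N z
  nE : ∀ z, N ((e - x * a) * z) = (e - x * a) * N z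
  nF : ∀ z, N ((f - y * b) * z) = (f - y * b) * N z
  nH : ∀ z, N ((h - k • (b * w)) * z) = (h - k • (b * w)) * N z

theorem core (r : GRel a b e f g h t x y w) {k : ℚ} {d s : A →ₗ[ℚ] A}
    (D : DRules a b e f g h t x y w k d) (S : SRules a b e f g h t x y w k s) :
    Core a b e f g h t x y w k d s (d ∘ₗ s + s ∘ₗ d) := by
  obtain ⟨d1, da, db, dh, dw, de, df, dg, dt, dx, dy⟩ := D
  obtain ⟨s1, sa, sb, sh, sw, sG, se, sf, st, sx, sy⟩ := S
  have xx : x * x = 0 := sq_zero_of_anti (r.anti 4 4)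
  have yy : y * y = 0 := sq_zero_of_anti (r.anti 5 5)
  have xx' : ∀ z, x * (x * z) = 0 := fun z => by rw [← mul_assoc, xx, zero_mul]
  have yy' : ∀ z, y * (y * z) = 0 := fun z => by rw [← mul_assoc, yy, zero_mul]
  have yg : ∀ z, y * (g * z) = -(g * (y * z)) := r.oc 5 2
  refine ⟨by simp [d1, s1], fun z => ?_, fun z => ?_, fun z => ?_, fun z => ?_, fun z => ?_,
    fun z => ?_, fun z => ?_, fun z => ?_, fun z => ?_, fun z => ?_⟩
  all_goals
    simp only [LinearMap.add_apply, LinearMap.comp_apply, sub_mul, mul_assoc, map_sub, map_add,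
      map_neg, map_smul, smul_mul_assoc, da, db, dh, dw, de, df, dg, dt, dx, dy, sa, sb, sh, sw,
      sG, se, sf, st, sx, sy, mul_add, mul_sub, smul_add, smul_sub, mul_neg, smul_neg,
      mul_smul_comm, r.ac e, r.ac x, r.bc f, r.bc y, r.wc y, xx', yy', r.bc g, r.wc g, yg, neg_neg,
      mul_zero, neg_zero, add_zero, zero_add]
    try abel

end


section
variable {A : Type*} [Ring A] [Algebra ℚ A] {a b e f g h t x y w : A}

theorem cElt_eq (k : ℚ) (c3 c0 c1 : Bool) (n : ℕ) :
    cEltC a b e f g h t x y w k ((c3, c0, c1), n) =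
      oF t c3 * (oF (e - x * a) c0 * (oF (f - y * b) c1 * (h - k • (b * w)) ^ n)) := by
  simp only [cEltC, oF, mul_assoc]

theorem oF_mem (S : Submodule ℚ A) (u : A) (hu : ∀ z ∈ S, u * z ∈ S) (c : Bool) (z : A)
    (hz : z ∈ S) : oF u c * z ∈ S := by
  cases c
  · simpa [oF] using hz
  · simpa [oF] using hu z hz

theorem cElt_mem (S : Submodule ℚ A) (k : ℚ) (h1 : 1 ∈ S) (ht : ∀ z ∈ S, t * z ∈ S)
    (hE : ∀ z ∈ S, (e - x * a) * z ∈ S) (hF : ∀ z ∈ S, (f - y * b) * z ∈ S)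
    (hH : ∀ z ∈ S, (h - k • (b * w)) * z ∈ S) (i) :
    cEltC a b e f g h t x y w k i ∈ S := by
  obtain ⟨⟨c3, c0, c1⟩, n⟩ := i
  rw [cElt_eq]
  refine oF_mem S _ ht _ _ (oF_mem S _ hE _ _ (oF_mem S _ hF _ _ ?_))
  induction n with
  | zero => simpa using h1
  | succ n ih => rw [pow_succ']; exact hH _ ih

structure DNew (a b e f g h t x y w : A) (k : ℚ) (d : A →ₗ[ℚ] A) : Prop where
  dE : ∀ z, d ((e - x * a) * z) = -((e - x * a) * d z)
  dF : ∀ z, d ((f - y * b) * z) = -((f - y * b) * d z)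
  dH : ∀ z, d ((h - k • (b * w)) * z) = (h - k • (b * w)) * d z

theorem dnew (r : GRel a b e f g h t x y w) {k : ℚ} {d : A →ₗ[ℚ] A}
    (D : DRules a b e f g h t x y w k d) : DNew a b e f g h t x y w k d := by
  obtain ⟨d1, da, db, dh, dw, de, df, dg, dt, dx, dy⟩ := D
  refine ⟨fun z => ?_, fun z => ?_, fun z => ?_⟩
  all_goals
    simp only [sub_mul, mul_assoc, map_sub, map_smul, smul_mul_assoc, da, db, dh, dw, de, df, dx,
      dy, mul_add, smul_add]
    abel

theorem cElt_d (r : GRel a b e f g h t x y w) {k : ℚ} {d : A →ₗ[ℚ] A}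
    (D : DRules a b e f g h t x y w k d) (i) : d (cEltC a b e f g h t x y w k i) = 0 := by
  obtain ⟨dE, dF, dH⟩ := dnew r D
  have := cElt_mem (a := a) (b := b) (e := e) (f := f) (g := g) (h := h) (t := t) (x := x)
      (y := y) (w := w) (LinearMap.ker d) k (by simp [D.done])
  simp only [LinearMap.mem_ker] at this
  apply this
  · intro z hz; rw [D.dt, hz]; simp
  · intro z hz; rw [dE, hz]; simp
  · intro z hz; rw [dF, hz]; simp
  · intro z hz; rw [dH, hz]; simp

theorem cElt_grade (r : GRel a b e f g h t x y w) (k : ℚ) (i) :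
    cEltC a b e f g h t x y w k i ∈ gradeLC a b e f g h t x y w (degCC i) := by
  have D := degs r
  have gE : ∀ m z, z ∈ gradeLC a b e f g h t x y w m →
      (e - x * a) * z ∈ gradeLC a b e f g h t x y w (m + 3) := by
    intro m z hz
    rw [sub_mul, mul_assoc]
    exact Submodule.sub_mem _ (D.ge _ _ hz) (D.gx _ _ (D.ga _ _ hz))
  have gF : ∀ m z, z ∈ gradeLC a b e f g h t x y w m →
      (f - y * b) * z ∈ gradeLC a b e f g h t x y w (m + 3) := by
    intro m z hz
    rw [sub_mul, mul_assoc]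
    exact Submodule.sub_mem _ (D.gf _ _ hz) (D.gy _ _ (D.gb _ _ hz))
  have gH : ∀ m z, z ∈ gradeLC a b e f g h t x y w m →
      (h - k • (b * w)) * z ∈ gradeLC a b e f g h t x y w (m + 4) := by
    intro m z hz
    rw [sub_mul, smul_mul_assoc, mul_assoc]
    exact Submodule.sub_mem _ (D.gh _ _ hz)
      (Submodule.smul_mem _ _ (D.gb _ _ (D.gw _ _ hz)))
  have go : ∀ (u : A) (q : ℕ), (∀ m z, z ∈ gradeLC a b e f g h t x y w m →
      u * z ∈ gradeLC a b e f g h t x y w (m + q)) → ∀ (c : Bool) m z,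
      z ∈ gradeLC a b e f g h t x y w m →
      oF u c * z ∈ gradeLC a b e f g h t x y w (m + if c then q else 0) := by
    intro u q hu c m z hz
    cases c
    · simpa [oF] using hz
    · simpa [oF] using hu m z hz
  obtain ⟨⟨c3, c0, c1⟩, n⟩ := i
  rw [cElt_eq]
  have hn : (h - k • (b * w)) ^ n ∈ gradeLC a b e f g h t x y w (4 * n) := by
    induction n with
    | zero => simpa using D.one
    | succ n ih => rw [pow_succ']; exact gH _ _ ih
  have := go _ _ D.gt c3 _ _ (go _ _ gE c0 _ _ (go _ _ gF c1 _ _ hn))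
  convert this using 2
  simp only [degCC]; ring

theorem cElt_li (hfree : IsFreeGCA ![a, b, h, w] ![e, f, g, t, x, y]) {k : ℚ} {d : A →ₗ[ℚ] A}
    (D : DRules a b e f g h t x y w k d) : LinearIndependent ℚ
      (fun i => (Submodule.Quotient.mk (cEltC a b e f g h t x y w k i) :
        A ⧸ LinearMap.range d)) := by
  have r := hfree.rel
  obtain ⟨Φ, Φa, Φb, Φg, hΦ⟩ := exists_Phi hfree
  -- the two-sided ideal generated by `a, b`
  let I2 : Submodule ℚ A := LinearMap.range (LinearMap.mulLeft ℚ a) ⊔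
    LinearMap.range (LinearMap.mulLeft ℚ b)
  have I2a : ∀ z, a * z ∈ I2 := fun z => Submodule.mem_sup_left ⟨z, rfl⟩
  have I2b : ∀ z, b * z ∈ I2 := fun z => Submodule.mem_sup_right ⟨z, rfl⟩
  have I2m : ∀ u z, z ∈ I2 → u * z ∈ I2 := by
    intro u z hz
    obtain ⟨_, ⟨p, rfl⟩, _, ⟨q, rfl⟩, rfl⟩ := Submodule.mem_sup.1 hz
    simp only [LinearMap.mulLeft_apply, mul_add, r.ac u, r.bc u]
    exact Submodule.add_mem _ (I2a _) (I2b _)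
  have I2Φ : ∀ z ∈ I2, Φ z = 0 := by
    intro z hz
    obtain ⟨_, ⟨p, rfl⟩, _, ⟨q, rfl⟩, rfl⟩ := Submodule.mem_sup.1 hz
    simp [Φa, Φb]
  have I2r : ∀ u z, u ∈ I2 → u * z ∈ I2 := by
    intro u z hz
    obtain ⟨_, ⟨p, rfl⟩, _, ⟨q, rfl⟩, rfl⟩ := Submodule.mem_sup.1 hz
    simp only [LinearMap.mulLeft_apply, add_mul, mul_assoc]
    exact Submodule.add_mem _ (I2a _) (I2b _)
  have I2s : ∀ U u Z z, U - u ∈ I2 → Z - z ∈ I2 → U * Z - u * z ∈ I2 := by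
    intro U u Z z h1 h2
    have : U * Z - u * z = U * (Z - z) + (U - u) * z := by
      rw [mul_sub, sub_mul]; abel
    rw [this]
    exact Submodule.add_mem _ (I2m _ _ h2) (I2r _ _ h1)
  have I2o : ∀ U u, U - u ∈ I2 → ∀ c, oF U c - oF u c ∈ I2 := by
    intro U u h1 c
    cases c
    · simp [oF]
    · simpa [oF] using h1
  have E2 : (e - x * a) - e ∈ I2 := by
    have : (e - x * a) - e = -(a * x) := by rw [r.a x]; abel
    rw [this]; exact Submodule.neg_mem _ (I2a _)
  have F2 : (f - y * b) - f ∈ I2 := by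
    have : (f - y * b) - f = -(b * y) := by rw [r.b y]; abel
    rw [this]; exact Submodule.neg_mem _ (I2b _)
  have H2 : (h - k • (b * w)) - h ∈ I2 := by
    have : (h - k • (b * w)) - h = -(k • (b * w)) := by abel
    rw [this]; exact Submodule.neg_mem _ (Submodule.smul_mem _ _ (I2b _))
  have P2 : ∀ n : ℕ, (h - k • (b * w)) ^ n - h ^ n ∈ I2 := by
    intro n
    induction n with
    | zero => simp
    | succ n ih => rw [pow_succ', pow_succ']; exact I2s _ _ _ _ H2 ih
  have hc : ∀ i, Φ (cEltC a b e f g h t x y w k i) = Finsupp.single i 1 := by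
    rintro ⟨⟨c3, c0, c1⟩, n⟩
    rw [cElt_eq, ← hΦ, ← sub_eq_zero, ← map_sub]
    apply I2Φ
    exact I2s _ _ _ _ (by simp) (I2s _ _ _ _ (I2o _ _ E2 _)
      (I2s _ _ _ _ (I2o _ _ F2 _) (P2 n)))
  -- the image of `d` lies in the ideal generated by `a, b, g`
  let I3 : Submodule ℚ A := I2 ⊔ LinearMap.range (LinearMap.mulLeft ℚ g)
  have I3a : ∀ z, a * z ∈ I3 := fun z => Submodule.mem_sup_left (I2a z)
  have I3b : ∀ z, b * z ∈ I3 := fun z => Submodule.mem_sup_left (I2b z)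
  have I3g : ∀ z, g * z ∈ I3 := fun z => Submodule.mem_sup_right ⟨z, rfl⟩
  have I3m : ∀ u, (∀ z, u * (g * z) ∈ I3) → ∀ z ∈ I3, u * z ∈ I3 := by
    intro u hu z hz
    obtain ⟨p, hp, _, ⟨q, rfl⟩, rfl⟩ := Submodule.mem_sup.1 hz
    rw [mul_add]
    exact Submodule.add_mem _ (Submodule.mem_sup_left (I2m _ _ hp)) (hu q)
  have mo : ∀ i, ∀ z ∈ I3, ![e, f, g, t, x, y] i * z ∈ I3 := by
    intro i
    refine I3m _ fun z => ?_
    have := r.oc i 2 z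
    change _ = -(g * _) at this
    change _ * (g * _) = _ at this
    rw [this]
    exact Submodule.neg_mem _ (I3g _)
  have mh : ∀ z ∈ I3, h * z ∈ I3 := I3m _ fun z => by rw [← r.hc g]; exact I3g _
  have mw : ∀ z ∈ I3, w * z ∈ I3 := I3m _ fun z => by rw [← r.wc g]; exact I3g _
  have hd : ∀ z, d z ∈ I3 := by
    have := sub_top hfree (I3.comap d) (by simp [D.done])
    simp only [Submodule.mem_comap] at this
    apply this
    · intro z hz; rw [D.da]; exact I3a _
    · intro z hz; rw [D.db]; exact I3b _
    · intro z hz; rw [D.dh]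
      exact Submodule.add_mem _ (Submodule.smul_mem _ _ (I3b _)) (mh _ hz)
    · intro z hz; rw [D.dw]; exact Submodule.add_mem _ (I3g _) (mw _ hz)
    · intro z hz; rw [D.de]; exact Submodule.sub_mem _ (I3a _) (mo 0 _ hz)
    · intro z hz; rw [D.df]; exact Submodule.sub_mem _ (I3b _) (mo 1 _ hz)
    · intro z hz; rw [D.dg]; exact Submodule.neg_mem _ (I3g _)
    · intro z hz; rw [D.dt]; exact Submodule.neg_mem _ (mo 3 _ hz)
    · intro z hz; rw [D.dx]; exact Submodule.sub_mem _ (I3a _) (mo 4 _ hz)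
    · intro z hz; rw [D.dy]; exact Submodule.sub_mem _ (I3b _) (mo 5 _ hz)
  have hk : LinearMap.range d ≤ LinearMap.ker Φ := by
    rintro _ ⟨z, rfl⟩
    obtain ⟨p, hp, _, ⟨q, rfl⟩, hs⟩ := Submodule.mem_sup.1 (hd z)
    rw [LinearMap.mem_ker, ← hs, map_add, I2Φ _ hp, zero_add]
    exact Φg q
  refine LinearIndependent.of_comp ((LinearMap.range d).liftQ Φ hk) ?_
  have : (((LinearMap.range d).liftQ Φ hk) ∘
      fun i => (Submodule.Quotient.mk (cEltC a b e f g h t x y w k i) :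
        A ⧸ LinearMap.range d)) = fun i => Finsupp.single i (1 : ℚ) := by
    funext i
    simp only [Function.comp_apply]
    exact (Submodule.liftQ_apply _ _ _).trans (hc i)
  rw [this]
  exact Finsupp.linearIndependent_single_one ℚ _

theorem cElt_mul (r : GRel a b e f g h t x y w) (k : ℚ) (C : Submodule ℚ A)
    (hC : C = Submodule.span ℚ (Set.range (cEltC a b e f g h t x y w k))) :
    (∀ z ∈ C, t * z ∈ C) ∧ (∀ z ∈ C, (e - x * a) * z ∈ C) ∧ (∀ z ∈ C, (f - y * b) * z ∈ C) ∧
    (∀ z ∈ C, (h - k • (b * w)) * z ∈ C) := by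
  obtain ⟨tt, EE, FF, tE, tF, EF, hH⟩ := newrel r k
  have hm : ∀ c3 c0 c1 n, oF t c3 * (oF (e - x * a) c0 * (oF (f - y * b) c1 *
      (h - k • (b * w)) ^ n)) ∈ C := by
    intro c3 c0 c1 n
    rw [← cElt_eq (g := g), hC]
    exact Submodule.subset_span ⟨_, rfl⟩
  have key : ∀ u, (∀ c3 c0 c1 n, u * (oF t c3 * (oF (e - x * a) c0 * (oF (f - y * b) c1 *
      (h - k • (b * w)) ^ n))) ∈ C) → ∀ z ∈ C, u * z ∈ C := by
    intro u hu z hz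
    have : C ≤ C.comap (LinearMap.mulLeft ℚ u) := by
      conv_lhs => rw [hC]
      rw [Submodule.span_le]
      rintro _ ⟨⟨⟨c3, c0, c1⟩, n⟩, rfl⟩
      rw [cElt_eq]
      exact hu _ _ _ _
    exact this hz
  generalize e - x * a = E at *
  generalize f - y * b = F at *
  generalize h - k • (b * w) = H at *
  have tt' : ∀ z, t * (t * z) = 0 := fun z => by rw [← mul_assoc, tt, zero_mul]
  have EE' : ∀ z, E * (E * z) = 0 := fun z => by rw [← mul_assoc, EE, zero_mul]
  have FF' : ∀ z, F * (F * z) = 0 := fun z => by rw [← mul_assoc, FF, zero_mul]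
  have tE' : ∀ z, E * (t * z) = -(t * (E * z)) := fun z => by
    rw [← mul_assoc, ← mul_assoc, tE, neg_mul, neg_neg]
  have tF' : ∀ z, F * (t * z) = -(t * (F * z)) := fun z => by
    rw [← mul_assoc, ← mul_assoc, tF, neg_mul, neg_neg]
  have EF' : ∀ z, F * (E * z) = -(E * (F * z)) := fun z => by
    rw [← mul_assoc, ← mul_assoc, EF, neg_mul, neg_neg]
  refine ⟨key _ ?_, key _ ?_, key _ ?_, key _ ?_⟩
  · intro c3 c0 c1 n
    have := hm true c0 c1 n
    cases c3
    · simpa [oF] using this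
    · simp only [oF, if_true, tt']; exact C.zero_mem
  · intro c3 c0 c1 n
    have := hm c3 true c1 n
    cases c3 <;> cases c0 <;> cases c1 <;> simpa [oF, tE', EE'] using this
  · intro c3 c0 c1 n
    have := hm c3 c0 true n
    cases c3 <;> cases c0 <;> cases c1 <;> simpa [oF, tF', EF', FF', FF] using this
  · intro c3 c0 c1 n
    have := hm c3 c0 c1 (n + 1)
    rw [pow_succ] at this
    rw [(hH _).eq]
    simpa only [mul_assoc] using this

theorem cElt_span (hfree : IsFreeGCA ![a, b, h, w] ![e, f, g, t, x, y]) {k : ℚ} {d : A →ₗ[ℚ] A}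
    (D : DRules a b e f g h t x y w k d) : LinearMap.ker d ≤
      Submodule.span ℚ (Set.range (cEltC a b e f g h t x y w k)) ⊔ LinearMap.range d := by
  have r := hfree.rel
  obtain ⟨s, S⟩ := exists_s hfree k
  have dd := dd_zero hfree D
  have cd := cElt_d r D
  have K := core r D S
  have hN : ∀ z, (d ∘ₗ s + s ∘ₗ d) z = d (s z) + s (d z) := fun _ => rfl
  generalize d ∘ₗ s + s ∘ₗ d = N at *
  obtain ⟨N1, Na, Nb, Nw, Ng, Nx, Ny, Nt, NE, NF, NH⟩ := K
  obtain ⟨C, hC⟩ : ∃ C, C = Submodule.span ℚ (Set.range (cEltC a b e f g h t x y w k)) :=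
    ⟨_, rfl⟩
  obtain ⟨Ct, CE, CF, CH⟩ := cElt_mul r k C hC
  have NC : ∀ z ∈ C, N z = 0 := by
    have : C ≤ LinearMap.ker N := by
      rw [hC, Submodule.span_le]
      rintro _ ⟨i, rfl⟩
      refine cElt_mem (LinearMap.ker N) k (by simpa using N1) ?_ ?_ ?_ ?_ i
      all_goals
        intro z hz
        simp only [LinearMap.mem_ker] at hz ⊢
        simp only [Nt, NE, NF, NH, hz, mul_zero]
    exact this
  have dC : ∀ z ∈ C, d z = 0 := by
    have : C ≤ LinearMap.ker d := by
      rw [hC, Submodule.span_le]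
      rintro _ ⟨i, rfl⟩
      exact cd i
    exact this
  have one_mem : (1 : A) ∈ C := by
    rw [hC]
    exact Submodule.subset_span ⟨((false, false, false), 0), by simp [cEltC]⟩
  let V : ℕ → Submodule ℚ A := fun m => Module.End.eigenspace N ((m : ℚ) + 1)
  have hV : ∀ m z, z ∈ V m ↔ N z = ((m : ℚ) + 1) • z := fun m z =>
    Module.End.mem_eigenspace_iff
  let W : Submodule ℚ A := ⨆ m, V m
  have VW : ∀ m, V m ≤ W := fun m => le_iSup V m
  -- operators of weight one
  have w1 : ∀ u, (∀ z, N (u * z) = u * z + u * N z) → ∀ z ∈ C ⊔ W, u * z ∈ C ⊔ W := by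
    intro u hu
    have : C ⊔ W ≤ (C ⊔ W).comap (LinearMap.mulLeft ℚ u) := by
      refine sup_le ?_ (iSup_le fun m => ?_)
      · intro z hz
        refine Submodule.mem_sup_right (VW 0 ((hV _ _).2 ?_))
        simp [hu, NC z hz]
      · intro z hz
        refine Submodule.mem_sup_right (VW (m + 1) ((hV _ _).2 ?_))
        have := (hV _ _).1 hz
        simp only [LinearMap.mulLeft_apply]
        rw [hu, this, mul_smul_comm, Nat.cast_add, Nat.cast_one]
        module
    exact this
  have w0 : ∀ u, (∀ z, N (u * z) = u * N z) → (∀ z ∈ C, u * z ∈ C) →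
      ∀ z ∈ C ⊔ W, u * z ∈ C ⊔ W := by
    intro u hu huC
    have : C ⊔ W ≤ (C ⊔ W).comap (LinearMap.mulLeft ℚ u) := by
      refine sup_le ?_ (iSup_le fun m => ?_)
      · intro z hz
        exact Submodule.mem_sup_left (huC z hz)
      · intro z hz
        refine Submodule.mem_sup_right (VW m ((hV _ _).2 ?_))
        have := (hV _ _).1 hz
        simp only [LinearMap.mulLeft_apply]
        rw [hu, this, mul_smul_comm]
    exact this
  have ma := w1 _ Na
  have mb := w1 _ Nb
  have mw := w1 _ Nw
  have mg := w1 _ Ng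
  have mx := w1 _ Nx
  have my := w1 _ Ny
  have mt := w0 _ Nt Ct
  have mE := w0 _ NE CE
  have mF := w0 _ NF CF
  have mH := w0 _ NH CH
  have top : ∀ z, z ∈ C ⊔ W := by
    refine sub_top hfree _ (Submodule.mem_sup_left one_mem) ma mb ?_ mw ?_ ?_ mg mt mx my
    · intro z hz
      have : h * z = (h - k • (b * w)) * z + k • (b * (w * z)) := by
        rw [sub_mul, smul_mul_assoc, mul_assoc]; abel
      rw [this]
      exact Submodule.add_mem _ (mH _ hz) (Submodule.smul_mem _ _ (mb _ (mw _ hz)))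
    · intro z hz
      have : e * z = (e - x * a) * z + x * (a * z) := by
        rw [sub_mul, mul_assoc]; abel
      rw [this]
      exact Submodule.add_mem _ (mE _ hz) (mx _ (ma _ hz))
    · intro z hz
      have : f * z = (f - y * b) * z + y * (b * z) := by
        rw [sub_mul, mul_assoc]; abel
      rw [this]
      exact Submodule.add_mem _ (mF _ hz) (my _ (mb _ hz))
  have ind : iSupIndep V :=
    (Module.End.eigenspaces_iSupIndep N).comp (f := fun m : ℕ => (m : ℚ) + 1) (by
      intro m n hmn
      have : (m : ℚ) + 1 = n + 1 := hmn
      exact_mod_cast add_right_cancel this)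
  have dV : ∀ m z, z ∈ V m → d z ∈ V m := by
    intro m z hz
    rw [hV] at hz ⊢
    rw [hN, dd, map_zero, add_zero, ← map_smul, ← hz, hN, map_add, dd, zero_add]
  intro z hz
  rw [LinearMap.mem_ker] at hz
  rw [← hC]
  obtain ⟨c, hc, v, hv, rfl⟩ := Submodule.mem_sup.1 (top z)
  refine Submodule.add_mem_sup hc ?_
  rw [map_add, dC c hc, zero_add] at hz
  obtain ⟨φ, hφ, hs⟩ := (Submodule.mem_iSup_iff_exists_finsupp V v).1 hv
  have h0 : ∀ m, d (φ m) = 0 := by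
    have hsum : ∑ m ∈ φ.support, d (φ m) = 0 := by
      rw [← map_sum]; rw [← hz, ← hs]; rfl
    intro m
    by_cases hm : m ∈ φ.support
    · rw [← Finset.add_sum_erase _ _ hm] at hsum
      refine Submodule.disjoint_def.1 (ind m) _ (dV m _ (hφ m)) ?_
      rw [eq_neg_of_add_eq_zero_left hsum]
      refine Submodule.neg_mem _ (Submodule.sum_mem _ fun j hj => ?_)
      exact Submodule.mem_iSup_of_mem j
        (Submodule.mem_iSup_of_mem (Finset.ne_of_mem_erase hj) (dV j _ (hφ j)))
    · rw [Finsupp.notMem_support_iff.1 hm, map_zero]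
  rw [← hs]
  refine Submodule.sum_mem _ fun m _ => ?_
  have h1 := (hV _ _).1 (hφ m)
  rw [hN, h0 m, map_zero, add_zero] at h1
  have hne : (m : ℚ) + 1 ≠ 0 := by positivity
  refine ⟨((m : ℚ) + 1)⁻¹ • s (φ m), ?_⟩
  rw [map_smul, h1, smul_smul, inv_mul_cancel₀ hne, one_smul]

end

theorem statement6 {A : Type*} [Ring A] [Algebra ℚ A]
    (a b e f g h t x y w : A) (k : ℚ) (hk : k ≠ 0) (d : A →ₗ[ℚ] A)
    (hfree : IsFreeGCA ![a, b, h, w] ![e, f, g, t, x, y])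
    (hdeg : ∀ (m : ℕ) (z : A), z ∈ gradeLC a b e f g h t x y w m →
      d z ∈ gradeLC a b e f g h t x y w (m + 1))
    (hleib : ∀ (m : ℕ) (z z' : A), z ∈ gradeLC a b e f g h t x y w m →
      d (z * z') = d z * z' + ((-1 : ℚ) ^ m) • (z * d z'))
    (hda : d a = 0) (hdb : d b = 0) (hdg : d g = 0)
    (hde : d e = a * a) (hdf : d f = b * b) (hdh : d h = k • (b * g))
    (hdt : d t = 0) (hdx : d x = a) (hdy : d y = b) (hdw : d w = g) :
    -- `d ∘ d = 0`
    (∀ z : A, d (d z) = 0) ∧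
    -- the four elements are cocycles
    d t = 0 ∧ d (e - x * a) = 0 ∧ d (f - y * b) = 0 ∧ d (h - k • (b * w)) = 0 ∧
    -- they satisfy the relations of free graded-commutative generators of degrees 1,3,3,4
    t * t = 0 ∧ (e - x * a) * (e - x * a) = 0 ∧ (f - y * b) * (f - y * b) = 0 ∧
    t * (e - x * a) = -((e - x * a) * t) ∧
    t * (f - y * b) = -((f - y * b) * t) ∧
    (e - x * a) * (f - y * b) = -((f - y * b) * (e - x * a)) ∧
    Commute (h - k • (b * w)) t ∧
    Commute (h - k • (b * w)) (e - x * a) ∧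
    Commute (h - k • (b * w)) (f - y * b) ∧
    -- the corresponding monomials are homogeneous cocycles of the indicated degrees …
    (∀ i, d (cEltC a b e f g h t x y w k i) = 0) ∧
    (∀ i, cEltC a b e f g h t x y w k i
      ∈ gradeLC a b e f g h t x y w (degCC i)) ∧
    -- … whose classes are linearly independent in the cohomology and span it:
    LinearIndependent ℚ
      (fun i => (Submodule.Quotient.mk (cEltC a b e f g h t x y w k i) :
        A ⧸ LinearMap.range d)) ∧
    (LinearMap.ker d ≤
      Submodule.span ℚ (Set.range (cEltC a b e f g h t x y w k)) ⊔ LinearMap.range d) := by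
  have r := hfree.rel
  have D := drules r k d hleib hda hdb hdg hde hdf hdh hdt hdx hdy hdw
  obtain ⟨dE, dF, dH⟩ := dnew r D
  obtain ⟨tt, EE, FF, tE, tF, EF, hH⟩ := newrel r k
  refine ⟨dd_zero hfree D, hdt, ?_, ?_, ?_, tt, EE, FF, tE, tF, EF, hH _, hH _, hH _,
    cElt_d r D, cElt_grade r k, cElt_li hfree D, cElt_span hfree D⟩
  · simpa [D.done] using dE 1
  · simpa [D.done] using dF 1
  · simpa [D.done] using dH 1
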